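/- arXiv:2411.06247 — 2 statements merged into one kernel-verified Lean document; each statement's English description precedes it below -/
import Mathlib

section
/- Let G be a double broom with diameter d ≥ 3, ℓ left leaves, r right leaves, n = d−1+ℓ+r vertices, and diametral path v_0,…,v_d. Then the access time from the stationary distribution to v_d is H(π, v_d) = (1/(6(n−1)))·(4d³ + 12d²(ℓ−1) + d(12ℓ(ℓ−2) + 24r − 13) + 3(−4ℓ² + ℓ(8r−3) + r(4r−19) + 14)). -/
/-! On a finite graph the hitting times of `v` are determined by the first-step equations: any
nonnegative `h` with `h v = 0` and `h u = 1 + ∑ w, step u w * h w` for `u ≠ v` equals `hit · v`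
(`hit_eq_of_first_step`); no separate irreducibility argument is needed, because `h` itself bounds the
defining series.

On a tree, the expected time to cross the edge `v_j v_{j+1}` is the sum of the degrees in the component
of `v_j` once that edge is removed.  Summing these over the spine gives the explicit candidate
`broomHit`, and `hit_broom` checks the first-step equations for it.  The access time is then
`(∑ deg u * hit u) / (∑ deg u)`, where numerator and denominator are polynomial sums along the spine
(`sum_spineDeg_mul_spineHit`, `sum_spineDeg`) plus the contribution of the extra leaves. -/


open scoped Classical

namespace RWMix

/-- The degree of a vertex. -/
noncomputable def deg {W : Type*} (G : SimpleGraph W) (v : W) : ℕ :=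
  Nat.card {w // G.Adj v w}

/-- The number of edges of a graph. -/
noncomputable def numEdges {W : Type*} (G : SimpleGraph W) : ℕ :=
  Nat.card G.edgeSet

/-- Transition matrix of the simple random walk: from `u` move to each neighbor
with probability `1/deg u`. -/
noncomputable def step {V : Type*} [Fintype V] (G : SimpleGraph V) : Matrix V V ℝ :=
  Matrix.of fun u w => if G.Adj u w then ((deg G u : ℝ))⁻¹ else 0

/-- The walk killed at `v` (rows at `v` are zeroed out). -/
noncomputable def killed {V : Type*} [Fintype V] (G : SimpleGraph V) (v : V) :
    Matrix V V ℝ :=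
  Matrix.of fun u w => if u = v then 0 else step G u w

/-- Expected hitting time `H(u,v)`: the sum over `t ≥ 0` of the probability that the walk
started at `u` has not visited `v` through time `t`.  This equals the expectation of the
first hitting time of `v`, and `hit G u u = 0`. -/
noncomputable def hit {V : Type*} [Fintype V] [DecidableEq V]
    (G : SimpleGraph V) (u v : V) : ℝ :=
  ∑' t : ℕ, ∑ w : V, (killed G v ^ t) u w * (if w = v then (0 : ℝ) else 1)

/-- The stationary distribution: `π v = deg v / (2 |E|)`. -/
noncomputable def statPr {V : Type*} [Fintype V] (G : SimpleGraph V) (v : V) : ℝ :=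
  (deg G v : ℝ) / (2 * (numEdges G : ℝ))

/-- The access time `H(π, v) = ∑_u π_u H(u,v)`. -/
noncomputable def hitPi {V : Type*} [Fintype V] [DecidableEq V]
    (G : SimpleGraph V) (v : V) : ℝ :=
  ∑ u : V, statPr G u * hit G u v

/-- The mixing time from vertex `v`: `H(v,π) = max_w H(w,v) − H(π,v)`. -/
noncomputable def mixFrom {V : Type*} [Fintype V] [DecidableEq V]
    (G : SimpleGraph V) (v : V) : ℝ :=
  (⨆ w : V, hit G w v) - hitPi G v

/-- The (exact) mixing time `T_mix(G) = max_v H(v,π)`. -/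
noncomputable def Tmix {V : Type*} [Fintype V] [DecidableEq V]
    (G : SimpleGraph V) : ℝ :=
  ⨆ v : V, mixFrom G v

/-- Edges of the double broom, on vertex set `Fin (d+1) ⊕ Fin a ⊕ Fin b`:
the spine path `v_0, …, v_d`, extra left leaves attached to `v_1`,
and extra right leaves attached to `v_{d-1}`. -/
def broomRel (d : ℕ) {a b : ℕ} :
    (Fin (d+1) ⊕ Fin a ⊕ Fin b) → (Fin (d+1) ⊕ Fin a ⊕ Fin b) → Prop
  | Sum.inl i, Sum.inl j => (i : ℕ) + 1 = (j : ℕ)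
  | Sum.inr (Sum.inl _), Sum.inl j => (j : ℕ) = 1
  | Sum.inr (Sum.inr _), Sum.inl j => (j : ℕ) = d - 1
  | _, _ => False

/-- The double broom of diameter `d` with `ℓ` left leaves and `r` right leaves:
the diametral path is `v_0, …, v_d` (where `v_0` is one left leaf and `v_d` one right
leaf), together with `ℓ - 1` further pendant leaves at `v_1` and `r - 1` further pendant
leaves at `v_{d-1}`.  It has `d - 1 + ℓ + r` vertices. -/
def doubleBroom (d ℓ r : ℕ) :
    SimpleGraph (Fin (d+1) ⊕ Fin (ℓ-1) ⊕ Fin (r-1)) :=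
  SimpleGraph.fromRel (broomRel d)

/-- The balanced double broom `D_{n,d}`, with `ℓ = ⌈(n-d+1)/2⌉` and `r = ⌊(n-d+1)/2⌋`. -/
def balancedDB (n d : ℕ) :=
  doubleBroom d ((n - d + 2) / 2) ((n - d + 1) / 2)

/-- A leaf is a vertex of degree one. -/
def IsLeaf {W : Type*} (G : SimpleGraph W) (v : W) : Prop := deg G v = 1

/-- `v 0, v 1, …, v s` is a leaf-to-leaf path in `G`. -/
def IsLeafPath {W : Type*} (G : SimpleGraph W) (s : ℕ) (v : Fin (s+1) → W) : Prop :=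
  Function.Injective v ∧
  (∀ i : ℕ, ∀ h : i < s, G.Adj (v ⟨i, by omega⟩) (v ⟨i + 1, by omega⟩)) ∧
  IsLeaf G (v 0) ∧ IsLeaf G (v (Fin.last s))

/-- A caterpillar: every vertex is within distance one of a fixed leaf-to-leaf path
(the spine). -/
def IsCaterpillar {W : Type*} (G : SimpleGraph W) : Prop :=
  ∃ (s : ℕ) (v : Fin (s+1) → W), IsLeafPath G s v ∧ ∀ w, ∃ i, G.dist w (v i) ≤ 1

/-- Move the leaf `y` from its neighbor `a` to the new neighbor `b`:
delete the edge `{a,y}` and add the edge `{b,y}`. -/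
def moveLeaf {W : Type*} (G : SimpleGraph W) (a y b : W) : SimpleGraph W :=
  SimpleGraph.fromEdgeSet ((G.edgeSet \ {s(a, y)}) ∪ {s(b, y)})

/-- A graph is a double broom if it is isomorphic to some `doubleBroom d ℓ r`
with `ℓ, r ≥ 1`. -/
def IsDoubleBroom {W : Type*} (G : SimpleGraph W) : Prop :=
  ∃ (d ℓ r : ℕ), 1 ≤ ℓ ∧ 1 ≤ r ∧ Nonempty (G ≃g doubleBroom d ℓ r)

/-- A near double broom: not a double broom, but there is exactly one leaf whose
removal results in a double broom. -/
def IsNearDoubleBroom {W : Type*} (G : SimpleGraph W) : Prop :=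
  ¬ IsDoubleBroom G ∧
    ∃! x : W, IsLeaf G x ∧ IsDoubleBroom (G.induce {y | y ≠ x})

/-- `w` belongs to the set `V_k`: either `w = v k`, or `w` is a vertex off the spine
adjacent to `v k`. -/
def inVk {W : Type*} {d : ℕ} (G : SimpleGraph W) (v : Fin (d+1) → W)
    (k : Fin (d+1)) (w : W) : Prop :=
  w = v k ∨ ((∀ m, w ≠ v m) ∧ G.Adj (v k) w)


/-- A nonnegative solution of the first-step equations is the hitting time.  Writing `Q` for the
killed walk and `𝟙` for the indicator of `{w ≠ v}`, the equations say `h = 𝟙 + Q h`, so the partial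
sums of `∑ Q ^ t 𝟙` are `h - Q ^ N h ≤ h`.  Hence the series converges, its terms tend to `0`, and
`0 ≤ h ≤ C 𝟙` forces `Q ^ N h → 0`. -/
lemma hit_eq_of_first_step {V : Type*} [Fintype V] [DecidableEq V] (G : SimpleGraph V) (v : V)
    (h : V → ℝ) (h0 : ∀ u, 0 ≤ h u) (hv : h v = 0)
    (hs : ∀ u, u ≠ v → h u = 1 + ∑ w, step G u w * h w) (u : V) : hit G u v = h u := by
  set Q := killed G v with hQ
  set one : V → ℝ := fun w => if w = v then (0 : ℝ) else 1 with hone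
  have one0 : ∀ w, 0 ≤ one w := fun w => by simp only [hone]; split_ifs <;> norm_num
  have fixh : h = one + Q.mulVec h := by
    ext x
    by_cases hx : x = v
    · subst hx
      simp [hone, hQ, killed, Matrix.mulVec, dotProduct, hv]
    · rw [hs x hx]
      simp [hone, hQ, killed, Matrix.mulVec, dotProduct, hx]
  have Q0 : ∀ t x y, 0 ≤ (Q ^ t) x y := by
    intro t
    induction t with
    | zero =>
      intro x y
      rw [pow_zero, Matrix.one_apply]
      split_ifs <;> norm_num
    | succ t ih =>
      intro x y
      rw [pow_succ, Matrix.mul_apply]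
      refine Finset.sum_nonneg fun z _ => mul_nonneg (ih x z) ?_
      simp only [hQ, killed, step, Matrix.of_apply]
      split_ifs <;> positivity
  have tel : ∀ N, ∑ t ∈ Finset.range N, ((Q ^ t).mulVec one) u = h u - ((Q ^ N).mulVec h) u := by
    intro N
    induction N with
    | zero => simp
    | succ N ih =>
      have e : (Q ^ N).mulVec h = (Q ^ N).mulVec one + (Q ^ (N + 1)).mulVec h := by
        conv_lhs => rw [fixh]
        rw [Matrix.mulVec_add, Matrix.mulVec_mulVec, ← pow_succ]
      have e' := congrFun e u
      simp only [Pi.add_apply] at e'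
      rw [Finset.sum_range_succ, ih]
      linarith
  have pos : ∀ (f : V → ℝ), (∀ w, 0 ≤ f w) → ∀ t, 0 ≤ ((Q ^ t).mulVec f) u := fun f hf t =>
    Finset.sum_nonneg fun z _ => mul_nonneg (Q0 t u z) (hf z)
  have summ : Summable fun t => ((Q ^ t).mulVec one) u :=
    summable_of_sum_range_le (c := h u) (pos one one0) fun N => by
      rw [tel]
      linarith [pos h h0 N]
  have hC : ∀ w, h w ≤ (∑ x, h x) * one w := by
    intro w
    by_cases hw : w = v
    · simp [hone, hw, hv]
    · simpa [hone, hw] using Finset.single_le_sum (fun x _ => h0 x) (Finset.mem_univ w)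
  have lim : Filter.Tendsto (fun N => ((Q ^ N).mulVec h) u) Filter.atTop (nhds 0) := by
    refine squeeze_zero (pos h h0) (g := fun N => (∑ x, h x) * ((Q ^ N).mulVec one) u) ?_ ?_
    · intro N
      simp only [Matrix.mulVec, dotProduct]
      rw [Finset.mul_sum]
      refine Finset.sum_le_sum fun w _ => ?_
      calc (Q ^ N) u w * h w ≤ (Q ^ N) u w * ((∑ x, h x) * one w) :=
            mul_le_mul_of_nonneg_left (hC w) (Q0 N u w)
        _ = _ := by ring
    · simpa using summ.tendsto_atTop_zero.const_mul (∑ x, h x)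
  have hsum : HasSum (fun t => ((Q ^ t).mulVec one) u) (h u) := by
    rw [hasSum_iff_tendsto_nat_of_nonneg (pos one one0)]
    simp only [tel]
    simpa using lim.const_sub (h u)
  exact hsum.tsum_eq

/-- The sum of `f` over the neighbours of `u`. -/
noncomputable def nbrSum {V : Type*} [Fintype V] (G : SimpleGraph V) (f : V → ℝ) (u : V) : ℝ :=
  ∑ w, if G.Adj u w then f w else 0

lemma deg_eq_nbrSum {V : Type*} [Fintype V] (G : SimpleGraph V) (u : V) :
    (deg G u : ℝ) = nbrSum G (fun _ => 1) u := by
  simp [deg, nbrSum, Nat.card_eq_fintype_card, Fintype.card_subtype]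

lemma sum_step_mul {V : Type*} [Fintype V] (G : SimpleGraph V) (f : V → ℝ) (u : V) :
    ∑ w, step G u w * f w = (deg G u : ℝ)⁻¹ * nbrSum G f u := by
  simp [step, nbrSum, Finset.mul_sum, ite_mul]

lemma two_mul_numEdges {V : Type*} [Fintype V] (G : SimpleGraph V) :
    2 * (numEdges G : ℝ) = ∑ u, (deg G u : ℝ) := by
  have h := G.sum_degrees_eq_twice_card_edges
  have h1 : numEdges G = G.edgeFinset.card := by
    rw [numEdges, Nat.card_eq_fintype_card, SimpleGraph.edgeFinset_card]
  have h2 : ∀ u, deg G u = G.degree u := fun u => by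
    rw [deg, Nat.card_eq_fintype_card, ← SimpleGraph.card_neighborSet_eq_degree]
    rfl
  rw [h1]
  simp only [h2]
  exact_mod_cast h.symm

/-- The double broom with `a` extra left leaves and `b` extra right leaves, that is,
`doubleBroom d (a + 1) (b + 1)`. -/
def broom (d a b : ℕ) : SimpleGraph (Fin (d + 1) ⊕ Fin a ⊕ Fin b) :=
  SimpleGraph.fromRel (broomRel d)

/-- The function on the broom equal to `g i` at the spine vertex `v_i`, to `x` at the extra left
leaves and to `y` at the extra right leaves. -/
def onBroom (d a b : ℕ) (g : ℕ → ℝ) (x y : ℝ) : Fin (d + 1) ⊕ Fin a ⊕ Fin b → ℝ :=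
  Sum.elim (fun i => g i) (Sum.elim (fun _ => x) fun _ => y)

lemma sum_onBroom (d a b : ℕ) (g : ℕ → ℝ) (x y : ℝ) :
    ∑ u, onBroom d a b g x y u = ∑ i ∈ Finset.range (d + 1), g i + (a * x + b * y) := by
  simp [onBroom, Fintype.sum_sum_type, Finset.sum_range]

lemma sum_fin_ite (n k : ℕ) (g : ℕ → ℝ) :
    ∑ j : Fin n, (if (j : ℕ) = k then g j else 0) = if k < n then g k else 0 := by
  rw [← Finset.sum_range (fun j => if j = k then g j else 0), Finset.sum_ite_eq']
  simp

/-- Neighbour sums on the spine: the predecessor, the successor, and the extra leaves at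
`v_1` and `v_{d-1}`. -/
lemma nbrSum_spine (d a b : ℕ) (g : ℕ → ℝ) (x y : ℝ) (i : Fin (d + 1)) :
    nbrSum (broom d a b) (onBroom d a b g x y) (Sum.inl i) =
      (if 0 < (i : ℕ) then g (i - 1) else 0) + (if (i : ℕ) < d then g (i + 1) else 0) +
      (if (i : ℕ) = 1 then a * x else 0) + (if (i : ℕ) = d - 1 then b * y else 0) := by
  have key : ∀ j : Fin (d + 1),
      (if (broom d a b).Adj (Sum.inl i) (Sum.inl j) then g j else 0) =
        (if (j : ℕ) = i - 1 then (if 0 < (i : ℕ) then g j else 0) else 0) +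
          (if (j : ℕ) = i + 1 then g j else 0) := by
    intro j
    have : (broom d a b).Adj (Sum.inl i) (Sum.inl j) ↔
        ((i : ℕ) + 1 = j ∨ (j : ℕ) + 1 = i) := by
      simp only [broom, SimpleGraph.fromRel_adj, broomRel, ne_eq, Sum.inl.injEq, Fin.ext_iff]
      omega
    simp only [this]
    split_ifs <;> first | omega | simp
  have hl : ∀ k : Fin a, (broom d a b).Adj (Sum.inl i) (Sum.inr (Sum.inl k)) ↔ (i : ℕ) = 1 := by
    simp [broom, SimpleGraph.fromRel_adj, broomRel]
  have hr : ∀ k : Fin b, (broom d a b).Adj (Sum.inl i) (Sum.inr (Sum.inr k)) ↔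
      (i : ℕ) = d - 1 := by
    simp [broom, SimpleGraph.fromRel_adj, broomRel]
  simp only [nbrSum, Fintype.sum_sum_type, onBroom, Sum.elim_inl, Sum.elim_inr, hl, hr, key,
    Finset.sum_add_distrib]
  rw [sum_fin_ite (d + 1) (i - 1) (fun j => if 0 < (i : ℕ) then g j else 0), sum_fin_ite]
  have : (i : ℕ) - 1 < d + 1 := by omega
  simp [this, add_assoc]

lemma nbrSum_left (d a b : ℕ) (hd : 1 ≤ d) (g : ℕ → ℝ) (x y : ℝ) (k : Fin a) :
    nbrSum (broom d a b) (onBroom d a b g x y) (Sum.inr (Sum.inl k)) = g 1 := by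
  have h1 : ∀ j : Fin (d + 1), (broom d a b).Adj (Sum.inr (Sum.inl k)) (Sum.inl j) ↔
      (j : ℕ) = 1 := by
    simp [broom, SimpleGraph.fromRel_adj, broomRel]
  have h2 : ∀ w, ¬ (broom d a b).Adj (Sum.inr (Sum.inl k)) (Sum.inr w) := by
    simp [broom, SimpleGraph.fromRel_adj, broomRel]
  rw [nbrSum, Fintype.sum_sum_type]
  simp only [onBroom, Sum.elim_inl, h1, h2, sum_fin_ite]
  simp
  omega

lemma nbrSum_right (d a b : ℕ) (g : ℕ → ℝ) (x y : ℝ) (k : Fin b) :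
    nbrSum (broom d a b) (onBroom d a b g x y) (Sum.inr (Sum.inr k)) = g (d - 1) := by
  have h1 : ∀ j : Fin (d + 1), (broom d a b).Adj (Sum.inr (Sum.inr k)) (Sum.inl j) ↔
      (j : ℕ) = d - 1 := by
    simp [broom, SimpleGraph.fromRel_adj, broomRel]
  have h2 : ∀ w, ¬ (broom d a b).Adj (Sum.inr (Sum.inr k)) (Sum.inr w) := by
    simp [broom, SimpleGraph.fromRel_adj, broomRel]
  rw [nbrSum, Fintype.sum_sum_type]
  simp only [onBroom, Sum.elim_inl, h1, h2, sum_fin_ite]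
  simp

/-- The degree of the spine vertex `v_i`. -/
def spineDeg (d a b i : ℕ) : ℝ :=
  (if 0 < i then 1 else 0) + (if i < d then 1 else 0) +
    (if i = 1 then (a : ℝ) else 0) + (if i = d - 1 then (b : ℝ) else 0)

lemma deg_broom (d a b : ℕ) (hd : 1 ≤ d) (u : Fin (d + 1) ⊕ Fin a ⊕ Fin b) :
    (deg (broom d a b) u : ℝ) = onBroom d a b (spineDeg d a b) 1 1 u := by
  have h1 : (fun _ => 1) = onBroom d a b (fun _ => 1) 1 1 := by
    ext (i | k | k) <;> rfl
  rw [deg_eq_nbrSum, h1]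
  rcases u with i | k | k
  · rw [nbrSum_spine]
    simp [onBroom, spineDeg]
  · rw [nbrSum_left _ _ _ hd]
    rfl
  · rw [nbrSum_right]
    rfl

/-- The hitting time of `v_d` from `v_i` in the broom with `d = e + 3`, `a` extra left and `b` extra
right leaves.  For `1 ≤ i ≤ d - 1` it is the sum over `i ≤ j < d` of the expected times
`H(v_j, v_{j+1})`; on a tree each of these is the sum of the degrees in the component of `v_j` after
deleting the edge `v_j v_{j+1}`, namely `2 * (a + j) + 1` for `j ≤ d - 2` and `2 * (n - 1) - 1`
for `j = d - 1`.  The leaf `v_0` needs one step more than `v_1`. -/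
noncomputable def spineHit (e a b i : ℕ) : ℝ :=
  let p : ℝ → ℝ := fun t =>
    2 * (e + 3 + a + b) - 1 + (2 * a + 1) * (e + 2 - t) + (e + 2) * (e + 1) - t * (t - 1)
  if i = 0 then p 1 + 1 else if i = e + 3 then 0 else p i

/-- The hitting times of `v_d` on the broom with `d = e + 3`: a leaf needs one step more than the
vertex it hangs from. -/
noncomputable def broomHit (e a b : ℕ) : Fin (e + 3 + 1) ⊕ Fin a ⊕ Fin b → ℝ :=
  onBroom (e + 3) a b (spineHit e a b) (spineHit e a b 1 + 1) (spineHit e a b (e + 2) + 1)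

lemma spineHit_nonneg (e a b i : ℕ) (hi : i ≤ e + 3) : 0 ≤ spineHit e a b i := by
  have h : ∀ i : ℕ, i ≤ e + 2 → (0 : ℝ) ≤ 2 * (e + 3 + a + b) - 1 + (2 * a + 1) * (e + 2 - i)
      + (e + 2) * (e + 1) - i * (i - 1) := by
    intro i hi
    obtain ⟨k, hk⟩ := Nat.exists_eq_add_of_le hi
    have hk' : (e : ℝ) + 2 = i + k := by exact_mod_cast hk
    have he : (e : ℝ) = i + k - 2 := by linarith
    have he0 : (0 : ℝ) ≤ e := Nat.cast_nonneg e
    have : (2 * (e + 3 + a + b) - 1 + (2 * a + 1) * (e + 2 - i)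
      + (e + 2) * (e + 1) - i * (i - 1) : ℝ)
        = 2 * e + 5 + 2 * a + 2 * b + 2 * a * k + 2 * i * k + k * k := by
      rw [he]; ring
    rw [this]
    positivity
  unfold spineHit
  simp only
  split_ifs with h1 h2
  · have := h 1 (by omega)
    push_cast at this
    linarith
  · exact le_rfl
  · exact h i (by omega)

lemma broomHit_nonneg (e a b : ℕ) (u) : 0 ≤ broomHit e a b u := by
  rcases u with i | k | k
  · exact spineHit_nonneg e a b i (by omega)
  · exact add_nonneg (spineHit_nonneg e a b 1 (by omega)) zero_le_one
  · exact add_nonneg (spineHit_nonneg e a b (e + 2) (by omega)) zero_le_one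

/-- The first-step equations on the spine, multiplied through by the degree. -/
lemma spine_first_step (e a b i : ℕ) (hi : i < e + 3) :
    spineDeg (e + 3) a b i * spineHit e a b i = spineDeg (e + 3) a b i +
      ((if 0 < i then spineHit e a b (i - 1) else 0) +
        (if i < e + 3 then spineHit e a b (i + 1) else 0) +
        (if i = 1 then a * (spineHit e a b 1 + 1) else 0) +
        (if i = e + 3 - 1 then b * (spineHit e a b (e + 2) + 1) else 0)) := by
  rcases Nat.lt_or_ge i 2 with h2 | h2
  · interval_cases i
    · simp [spineDeg, spineHit]
      ring
    · simp [spineDeg, spineHit]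
      ring
  · obtain ⟨k, rfl⟩ := Nat.exists_eq_add_of_le' h2
    rcases Nat.lt_or_ge k e with hk | hk
    · have c1 : k ≠ e := by omega
      have c3 : k ≠ e + 2 := by omega
      have c4 : k ≠ e + 1 := by omega
      have c5 : k < e + 1 := by omega
      simp [spineDeg, spineHit, c1, c3, c4, c5]
      ring
    · obtain rfl : k = e := by omega
      simp [spineDeg, spineHit]
      ring

lemma hit_broom (e a b : ℕ) (u : Fin (e + 3 + 1) ⊕ Fin a ⊕ Fin b) :
    hit (broom (e + 3) a b) u (Sum.inl (Fin.last (e + 3))) = broomHit e a b u := by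
  refine hit_eq_of_first_step _ _ _ (broomHit_nonneg e a b) ?_ ?_ u
  · simp [broomHit, onBroom, spineHit]
  intro u hu
  rw [sum_step_mul, deg_broom _ _ _ (by omega), broomHit]
  rcases u with i | k | k
  · have hi : (i : ℕ) < e + 3 := by
      have : i ≠ Fin.last (e + 3) := fun h => hu (by rw [h])
      exact Fin.val_lt_last this
    have hpos : 0 < spineDeg (e + 3) a b i := by
      unfold spineDeg
      rw [if_pos hi]
      positivity
    rw [nbrSum_spine]
    have h := spine_first_step e a b i hi
    simp only [onBroom, Sum.elim_inl]
    rw [← sub_eq_iff_eq_add', eq_inv_mul_iff_mul_eq₀ hpos.ne']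
    linarith
  · rw [nbrSum_left _ _ _ (by omega)]
    simp [onBroom, add_comm]
  · rw [nbrSum_right]
    simp [onBroom, add_comm]

lemma sum_spineDeg (e a b : ℕ) :
    ∑ i ∈ Finset.range (e + 3 + 1), spineDeg (e + 3) a b i = 2 * (e + 3) + a + b := by
  rw [Finset.sum_range_succ, Finset.sum_range_succ, Finset.sum_range_succ', Finset.sum_range_succ']
  have : ∀ k ∈ Finset.range e, spineDeg (e + 3) a b (k + 1 + 1) = 2 := by
    intro k hk
    have hk := Finset.mem_range.1 hk
    have c1 : k ≠ e := by omega
    have c5 : k < e + 1 := by omega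
    simp [spineDeg, c1, c5]
    norm_num
  rw [Finset.sum_congr rfl this]
  simp [spineDeg]
  ring

lemma sum_middle (A B : ℝ) (e : ℕ) :
    ∑ k ∈ Finset.range e, 2 * (A - B * ((k : ℝ) + 2) - (k + 2) * (k + 1)) =
      2 * e * A - B * (e * (e + 3)) - 2 * e * (e + 1) * (e + 2) / 3 := by
  induction e with
  | zero => simp
  | succ e ih =>
    rw [Finset.sum_range_succ, ih]
    push_cast
    ring

/-- The closed form keeps the contributions of `v_0`, `v_1`, the middle of the spine and `v_{d-1}`
apart. -/
lemma sum_spineDeg_mul_spineHit (e a b : ℕ) :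
    ∑ i ∈ Finset.range (e + 3 + 1), spineDeg (e + 3) a b i * spineHit e a b i =
      let p₁ : ℝ := 2 * (e + 3 + a + b) - 1 + (2 * a + 1) * (e + 1) + (e + 2) * (e + 1)
      (p₁ + 1) + (2 + a) * p₁ +
        (2 * e * (2 * (e + 3 + a + b) - 1 + (2 * a + 1) * (e + 2) + (e + 2) * (e + 1))
          - (2 * a + 1) * (e * (e + 3)) - 2 * e * (e + 1) * (e + 2) / 3) +
        (2 + b) * (2 * (e + 3 + a + b) - 1) := by
  rw [Finset.sum_range_succ, Finset.sum_range_succ, Finset.sum_range_succ', Finset.sum_range_succ']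
  have : ∀ k ∈ Finset.range e, spineDeg (e + 3) a b (k + 1 + 1) * spineHit e a b (k + 1 + 1) =
      2 * ((2 * (e + 3 + a + b) - 1 + (2 * a + 1) * (e + 2) + (e + 2) * (e + 1))
        - (2 * a + 1) * ((k : ℝ) + 2) - (k + 2) * (k + 1)) := by
    intro k hk
    have hk := Finset.mem_range.1 hk
    have c1 : k ≠ e := by omega
    have c4 : k ≠ e + 1 := by omega
    have c5 : k < e + 1 := by omega
    simp [spineDeg, spineHit, c1, c4, c5]
    ring
  rw [Finset.sum_congr rfl this, sum_middle]
  simp [spineDeg, spineHit]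
  ring

/-- the access time from the stationary distribution to `v_d` on a
double broom. -/
theorem stmt4 (d ℓ r n : ℕ) (hd : 3 ≤ d) (hl : 1 ≤ ℓ) (hr : 1 ≤ r)
    (hn : n = d - 1 + ℓ + r) :
    hitPi (doubleBroom d ℓ r) (Sum.inl (Fin.last d)) =
      (1 / (6 * ((n : ℝ) - 1))) *
        (4 * (d : ℝ) ^ 3 + 12 * (d : ℝ) ^ 2 * ((ℓ : ℝ) - 1)
          + (d : ℝ) * (12 * (ℓ : ℝ) * ((ℓ : ℝ) - 2) + 24 * (r : ℝ) - 13)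
          + 3 * (-4 * (ℓ : ℝ) ^ 2 + (ℓ : ℝ) * (8 * (r : ℝ) - 3)
              + (r : ℝ) * (4 * (r : ℝ) - 19) + 14)) := by
  obtain ⟨e, rfl⟩ := Nat.exists_eq_add_of_le' hd
  obtain ⟨a, rfl⟩ := Nat.exists_eq_add_of_le' hl
  obtain ⟨b, rfl⟩ := Nat.exists_eq_add_of_le' hr
  have hn' : (n : ℝ) = e + a + b + 4 := by
    rw [hn, show e + 3 - 1 + (a + 1) + (b + 1) = e + a + b + 4 by omega]
    push_cast
    ring
  -- `a + 1 - 1` reduces to `a`, so both graphs live on the same vertex type.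
  change hitPi (broom (e + 3) a b) (Sum.inl (Fin.last (e + 3))) = _
  have hE : 2 * (numEdges (broom (e + 3) a b) : ℝ) = 2 * (e + 3 + a + b) := by
    rw [two_mul_numEdges, Finset.sum_congr rfl fun u _ => deg_broom _ _ _ (by omega) u,
      sum_onBroom, sum_spineDeg]
    ring
  have hmul : ∀ u, onBroom (e + 3) a b (spineDeg (e + 3) a b) 1 1 u * broomHit e a b u =
      onBroom (e + 3) a b (fun i => spineDeg (e + 3) a b i * spineHit e a b i)
        (spineHit e a b 1 + 1) (spineHit e a b (e + 2) + 1) u := by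
    rintro (i | k | k) <;> simp [broomHit, onBroom]
  have hpi : hitPi (broom (e + 3) a b) (Sum.inl (Fin.last (e + 3))) =
      (∑ u, onBroom (e + 3) a b (spineDeg (e + 3) a b) 1 1 u * broomHit e a b u) /
        (2 * (e + 3 + a + b)) := by
    rw [hitPi, Finset.sum_div]
    refine Finset.sum_congr rfl fun u _ => ?_
    rw [hit_broom, statPr, hE, deg_broom _ _ _ (by omega)]
    ring
  rw [hpi, Finset.sum_congr rfl fun u _ => hmul u, sum_onBroom, sum_spineDeg_mul_spineHit, hn']
  have h1 : (e : ℝ) + 3 + a + b ≠ 0 := by positivity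
  have h2 : (e : ℝ) + a + b + 4 - 1 ≠ 0 := by
    rw [show (e : ℝ) + a + b + 4 - 1 = e + 3 + a + b by ring]
    exact h1
  simp [spineHit]
  field_simp
  ring

end RWMix
end

section
/- For the path P_n on n ≥ 4 vertices (the double broom with diameter d = n−1 and ℓ = r = 1), the mixing time is T_mix(P_n) = (2n² − 4n + 3)/6. -/
/-!
Let the path have vertices `0, …, m`. The first-step equations have the explicit solution
`H(u,v) = v² - u²` for `u ≤ v` and `H(u,v) = (m-v)² - (m-u)²` for `u ≥ v` (`hit_path`); a
nonnegative solution of those equations is automatically the series defining `hit`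
(`hit_eq_of_step`). The degree-weighted sum over the vertices is a sum over the `m` edges of the
two endpoint values, which gives `H(π,v) = (4(v² - vw + w²) - 1)/6` with `w = m - v`
(`hitPi_path`). The worst starting point for hitting `v` is an end of the path
(`iSup_hit_path`), so `H(v,π) = max(v², w²) - H(π,v)`. With `v ≤ w` this is
`(2w² + 4vw - 4v² + 1)/6 ≤ (2(v+w)² + 1)/6 = (2m² + 1)/6`, with equality for `v = 0`.
-/

open scoped Classical

namespace RWMix

/-! ### Hitting times from the first-step equations -/

section Hitting

variable {V : Type*} [Fintype V] [DecidableEq V]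

lemma killed_nonneg (G : SimpleGraph V) (v u w : V) : 0 ≤ killed G v u w := by
  simp only [killed, step, Matrix.of_apply]
  split_ifs <;> positivity

lemma killed_pow_nonneg (G : SimpleGraph V) (v : V) (t : ℕ) (u w : V) :
    0 ≤ (killed G v ^ t) u w := by
  induction t generalizing w with
  | zero =>
    rw [pow_zero, Matrix.one_apply]
    split_ifs <;> norm_num
  | succ t ih =>
    rw [pow_succ, Matrix.mul_apply]
    exact Finset.sum_nonneg fun x _ => mul_nonneg (ih x) (killed_nonneg G v x w)

/-- Uniqueness for the Dirichlet problem defining hitting times: a nonnegative function that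
vanishes at `v` and satisfies the first-step equations elsewhere is `H(·,v)`. No connectivity is
needed, since such a function `h` bounds the partial sums of the series defining `hit`. -/
lemma hit_eq_of_step (G : SimpleGraph V) (v : V) (h : V → ℝ) (h0 : ∀ u, 0 ≤ h u) (hv : h v = 0)
    (hs : ∀ u, u ≠ v → h u = 1 + ∑ w, step G u w * h w) (u : V) : hit G u v = h u := by
  set K := killed G v with hK
  let b : V → ℝ := fun w => if w = v then 0 else 1
  let a : ℕ → ℝ := fun t => ∑ w, (K ^ t) u w * b w
  let r : ℕ → ℝ := fun t => ∑ w, (K ^ t) u w * h w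
  have hKh : ∀ x, h x = b x + ∑ w, K x w * h w := by
    intro x
    by_cases hx : x = v
    · subst hx
      simp [b, hK, killed, hv]
    · have := hs x hx
      simpa [b, hK, killed, hx] using this
  have hrec : ∀ t, r t = a t + r (t + 1) := by
    intro t
    have h1 : r (t + 1) = ∑ x, (K ^ t) u x * ∑ w, K x w * h w := by
      simp only [r, pow_succ, Matrix.mul_apply, Finset.sum_mul, Finset.mul_sum]
      rw [Finset.sum_comm]
      simp only [mul_assoc]
    rw [h1, ← Finset.sum_add_distrib]
    refine Finset.sum_congr rfl fun x _ => ?_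
    rw [← mul_add, ← hKh x]
  have hr0 : r 0 = h u := by simp [r, Matrix.one_apply]
  have hsum : ∀ T, ∑ t ∈ Finset.range T, a t = h u - r T := by
    intro T
    induction T with
    | zero => simp [hr0]
    | succ T ih => rw [Finset.sum_range_succ, ih, hrec T]; ring
  have hb0 : ∀ w, 0 ≤ b w := fun w => by simp only [b]; split_ifs <;> norm_num
  have ha0 : ∀ t, 0 ≤ a t := fun t =>
    Finset.sum_nonneg fun w _ => mul_nonneg (killed_pow_nonneg G v t u w) (hb0 w)
  have hrnn : ∀ t, 0 ≤ r t := fun t =>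
    Finset.sum_nonneg fun w _ => mul_nonneg (killed_pow_nonneg G v t u w) (h0 w)
  have hsm : Summable a :=
    summable_of_sum_range_le ha0 (c := h u) fun T => by rw [hsum]; linarith [hrnn T]
  -- `h ≤ C • b` since `h` vanishes at `v`, so the remainder `r` is dominated by the terms `a`.
  have hC : ∀ w, h w ≤ (∑ x, h x) * b w := by
    intro w
    by_cases hw : w = v
    · simp [b, hw, hv]
    · simpa [b, hw] using Finset.single_le_sum (fun x _ => h0 x) (Finset.mem_univ w)
  have hra : ∀ t, r t ≤ (∑ x, h x) * a t := by
    intro t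
    simp only [r, a]
    rw [Finset.mul_sum]
    refine Finset.sum_le_sum fun w _ => ?_
    calc (K ^ t) u w * h w ≤ (K ^ t) u w * ((∑ x, h x) * b w) :=
          mul_le_mul_of_nonneg_left (hC w) (killed_pow_nonneg G v t u w)
      _ = _ := by ring
  have hrlim : Filter.Tendsto r Filter.atTop (nhds 0) := by
    refine squeeze_zero hrnn hra ?_
    simpa using hsm.tendsto_atTop_zero.const_mul (∑ x, h x)
  have hlim : Filter.Tendsto (fun T => ∑ t ∈ Finset.range T, a t) Filter.atTop (nhds (h u)) := by
    simp only [hsum]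
    simpa using hrlim.const_sub (h u)
  exact tendsto_nhds_unique hsm.hasSum.tendsto_sum_nat hlim

end Hitting

/-! ### Hitting times and access times on the path -/

section Path

open SimpleGraph

/-- Sum of a function over the neighbours of a vertex of the path. -/
lemma sum_adj_path (m : ℕ) (F : ℕ → ℝ) (u : Fin (m + 1)) :
    (∑ w : Fin (m + 1), if (pathGraph (m + 1)).Adj u w then F w else 0) =
      (if (u : ℕ) < m then F (u + 1) else 0) + (if 0 < (u : ℕ) then F (u - 1) else 0) := by
  have hu := u.2
  have h1 : ∀ w : Fin (m + 1), (if (pathGraph (m + 1)).Adj u w then F w else 0) =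
      (if (w : ℕ) = u + 1 then F w else 0) +
        (if 0 < (u : ℕ) then (if (w : ℕ) = u - 1 then F w else 0) else 0) := by
    intro w
    simp only [pathGraph_adj]
    split_ifs <;> first | omega | simp
  simp only [h1]
  rw [Fin.sum_univ_eq_sum_range (fun w => (if w = (u : ℕ) + 1 then F w else 0) +
        (if 0 < (u : ℕ) then (if w = u - 1 then F w else 0) else 0)) (m + 1),
    Finset.sum_add_distrib, Finset.sum_ite_eq']
  congr 1
  · simp
  · split_ifs
    · rw [Finset.sum_ite_eq', if_pos (Finset.mem_range.2 (by omega))]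
    · simp

lemma deg_path (m : ℕ) (u : Fin (m + 1)) :
    (deg (pathGraph (m + 1)) u : ℝ) =
      (if (u : ℕ) < m then 1 else 0) + (if 0 < (u : ℕ) then 1 else 0) := by
  rw [← sum_adj_path m (fun _ => 1) u]
  simp [deg, Fintype.card_subtype]

lemma sum_deg_mul_path (m : ℕ) (F : ℕ → ℝ) :
    ∑ u : Fin (m + 1), (deg (pathGraph (m + 1)) u : ℝ) * F u =
      ∑ i ∈ Finset.range m, (F i + F (i + 1)) := by
  simp only [deg_path]
  rw [Fin.sum_univ_eq_sum_range
    (fun u => ((if u < m then 1 else 0) + (if 0 < u then 1 else 0) : ℝ) * F u) (m + 1)]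
  simp only [add_mul]
  rw [Finset.sum_add_distrib, Finset.sum_add_distrib, Finset.sum_range_succ,
    Finset.sum_range_succ' (fun u => (if 0 < u then (1 : ℝ) else 0) * F u)]
  simp only [lt_irrefl, if_false, zero_mul, add_zero, Nat.succ_pos, if_true, one_mul]
  congr 1
  refine Finset.sum_congr rfl fun i hi => ?_
  rw [if_pos (Finset.mem_range.1 hi), one_mul]

lemma numEdges_path (m : ℕ) : (numEdges (pathGraph (m + 1)) : ℝ) = m := by
  have h := sum_degrees_eq_twice_card_edges (pathGraph (m + 1))
  have hd : ∀ u, (pathGraph (m + 1)).degree u = deg (pathGraph (m + 1)) u := by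
    intro u
    rw [deg, Nat.card_eq_fintype_card, ← card_neighborSet_eq_degree]
    exact Fintype.card_congr (Equiv.refl _)
  have he : (pathGraph (m + 1)).edgeFinset.card = numEdges (pathGraph (m + 1)) := by
    rw [numEdges, Nat.card_eq_fintype_card, edgeFinset_card]
  rw [he] at h
  simp only [hd] at h
  have h2 := sum_deg_mul_path m (fun _ => 1)
  simp only [mul_one, Finset.sum_const, Finset.card_range, nsmul_eq_mul] at h2
  have h3 : ((∑ u, deg (pathGraph (m + 1)) u : ℕ) : ℝ) = 2 * numEdges (pathGraph (m + 1)) := by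
    exact_mod_cast h
  push_cast at h3
  linarith

/-- The closed form of the hitting time from `u` to `v` on the path with vertices `0, …, m`,
meaningful for `u, v ≤ m`. -/
noncomputable def pathHit (m v u : ℕ) : ℝ :=
  if u ≤ v then (v : ℝ) ^ 2 - (u : ℝ) ^ 2 else ((m : ℝ) - v) ^ 2 - ((m : ℝ) - u) ^ 2

lemma pathHit_of_ge {m v u : ℕ} (h : v ≤ u) :
    pathHit m v u = ((m : ℝ) - v) ^ 2 - ((m : ℝ) - u) ^ 2 := by
  unfold pathHit
  split_ifs with h1
  · obtain rfl := le_antisymm h h1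
    ring
  · rfl

lemma pathHit_of_le {m v u : ℕ} (h : u ≤ v) :
    pathHit m v u = (v : ℝ) ^ 2 - (u : ℝ) ^ 2 := if_pos h

lemma hit_path (m : ℕ) (u v : Fin (m + 1)) :
    hit (pathGraph (m + 1)) u v = pathHit m v u := by
  have hvm : (v : ℕ) ≤ m := by omega
  refine hit_eq_of_step (pathGraph (m + 1)) v (fun u => pathHit m v u) ?_ ?_ ?_ u
  · intro u
    rcases le_total (u : ℕ) v with h | h
    · simp only [pathHit_of_le h]
      have : (u : ℝ) ≤ v := by exact_mod_cast h
      have : (0 : ℝ) ≤ u := by positivity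
      nlinarith
    · simp only [pathHit_of_ge h]
      have : (v : ℝ) ≤ u := by exact_mod_cast h
      have : (u : ℝ) ≤ m := by exact_mod_cast (by omega : (u : ℕ) ≤ m)
      nlinarith
  · simp [pathHit]
  · intro u huv
    have hne : (u : ℕ) ≠ v := fun h => huv (Fin.ext h)
    have h1 : ∀ w : Fin (m + 1), step (pathGraph (m + 1)) u w * pathHit m v w =
        (deg (pathGraph (m + 1)) u : ℝ)⁻¹ *
          (if (pathGraph (m + 1)).Adj u w then pathHit m v w else 0) := by
      intro w
      simp only [step, Matrix.of_apply]
      split_ifs <;> simp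
    simp only [h1]
    rw [← Finset.mul_sum, sum_adj_path m (pathHit m v) u, deg_path]
    have hu := u.2
    generalize (u : ℕ) = x at *
    generalize (v : ℕ) = y at *
    rcases lt_or_gt_of_ne hne with h | h
    · have hxm : x < m := by omega
      simp only [if_pos hxm]
      rw [pathHit_of_le h.le, pathHit_of_le (u := x + 1) (by omega)]
      -- At the endpoint `0` the walk has only one neighbour.
      rcases x with _ | x
      · norm_num
      · rw [if_pos (Nat.succ_pos x), if_pos (Nat.succ_pos x), pathHit_of_le (by omega)]
        push_cast [Nat.add_sub_cancel]
        ring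
    · obtain ⟨x, rfl⟩ : ∃ k, x = k + 1 := ⟨x - 1, by omega⟩
      rw [if_pos (Nat.succ_pos x), if_pos (Nat.succ_pos x), pathHit_of_ge h.le,
        pathHit_of_ge (u := x + 1 - 1) (by omega)]
      by_cases hm : x + 1 < m
      · rw [if_pos hm, if_pos hm, pathHit_of_ge (by omega)]
        push_cast [Nat.add_sub_cancel]
        ring
      · obtain rfl : m = x + 1 := by omega
        rw [if_neg hm, if_neg hm]
        push_cast [Nat.add_sub_cancel]
        ring

lemma hitPi_path (m : ℕ) (hm : 0 < m) (v : Fin (m + 1)) :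
    hitPi (pathGraph (m + 1)) v =
      (4 * ((v : ℝ) ^ 2 - v * (m - v) + (m - v) ^ 2) - 1) / 6 := by
  -- Split the edges of the path into the `v` edges left of `v` and the `w` edges right of it.
  obtain ⟨w, hw⟩ : ∃ w, m = v + w := ⟨m - v, by omega⟩
  have hm' : (m : ℝ) ≠ 0 := by positivity
  have h1 : hitPi (pathGraph (m + 1)) v =
      (∑ i ∈ Finset.range m, (pathHit m v i + pathHit m v (i + 1))) / (2 * m) := by
    rw [← sum_deg_mul_path, Finset.sum_div, hitPi]
    refine Finset.sum_congr rfl fun u _ => ?_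
    rw [statPr, hit_path, numEdges_path]
    ring
  rw [h1, div_eq_iff (by positivity)]
  generalize (v : ℕ) = y at *
  subst hw
  rw [Finset.sum_range_add]
  have hl : ∑ i ∈ Finset.range y, (pathHit (y + w) y i + pathHit (y + w) y (i + 1)) =
      ∑ i ∈ Finset.range y, (2 * (y : ℝ) ^ 2 - i ^ 2 - (i + 1) ^ 2) := by
    refine Finset.sum_congr rfl fun i hi => ?_
    have := Finset.mem_range.1 hi
    rw [pathHit_of_le this.le, pathHit_of_le this]
    push_cast
    ring
  have hr : ∑ i ∈ Finset.range w, (pathHit (y + w) y (y + i) + pathHit (y + w) y (y + i + 1)) =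
      ∑ i ∈ Finset.range w, (2 * (w : ℝ) ^ 2 - (w - i) ^ 2 - (w - i - 1) ^ 2) := by
    refine Finset.sum_congr rfl fun i hi => ?_
    rw [pathHit_of_ge (by omega), pathHit_of_ge (by omega)]
    push_cast
    ring
  have hl' : ∀ (C : ℝ) (k : ℕ), ∑ i ∈ Finset.range k, (2 * C - (i : ℝ) ^ 2 - (i + 1) ^ 2) =
      2 * k * C - k * (2 * k ^ 2 + 1) / 3 := by
    intro C k
    induction k with
    | zero => simp
    | succ k ih => rw [Finset.sum_range_succ, ih]; push_cast; ring
  have hr' : ∀ (c : ℝ) (k : ℕ),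
      ∑ i ∈ Finset.range k, (2 * c ^ 2 - (c - (i : ℝ)) ^ 2 - (c - i - 1) ^ 2) =
      2 * k * c ^ 2 - c * (2 * c ^ 2 + 1) / 3 + (c - k) * (2 * (c - k) ^ 2 + 1) / 3 := by
    intro c k
    induction k with
    | zero => simp
    | succ k ih => rw [Finset.sum_range_succ, ih]; push_cast; ring
  rw [hl, hr, hl', hr']
  push_cast
  ring

lemma iSup_hit_path (m : ℕ) (v : Fin (m + 1)) :
    (⨆ w, hit (pathGraph (m + 1)) w v) = max ((v : ℝ) ^ 2) (((m : ℝ) - v) ^ 2) := by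
  have hb : BddAbove (Set.range fun w => hit (pathGraph (m + 1)) w v) := Set.finite_range _ |>.bddAbove
  apply le_antisymm
  · refine ciSup_le fun w => ?_
    rw [hit_path, pathHit]
    split_ifs
    · exact le_max_of_le_left (by nlinarith [sq_nonneg ((w : ℕ) : ℝ)])
    · exact le_max_of_le_right (by nlinarith [sq_nonneg ((m : ℝ) - (w : ℕ))])
  · refine max_le ?_ ?_
    · refine le_ciSup_of_le hb 0 ?_
      rw [hit_path, pathHit_of_le (by simp)]
      simp
    · refine le_ciSup_of_le hb (Fin.last m) ?_
      rw [hit_path, pathHit_of_ge (by simp; omega)]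
      simp

end Path

/-- the mixing time of the path on `n ≥ 4` vertices is
`(2n² - 4n + 3)/6`. -/
theorem stmt6 (n : ℕ) (hn : 4 ≤ n) :
    Tmix (SimpleGraph.pathGraph n) = (2 * (n : ℝ) ^ 2 - 4 * (n : ℝ) + 3) / 6 := by
  obtain ⟨m, rfl⟩ : ∃ m, n = m + 1 := ⟨n - 1, by omega⟩
  have hm : 0 < m := by omega
  have hmix : ∀ v : Fin (m + 1), mixFrom (SimpleGraph.pathGraph (m + 1)) v =
      max ((v : ℝ) ^ 2) (((m : ℝ) - v) ^ 2) -
        (4 * ((v : ℝ) ^ 2 - v * (m - v) + (m - v) ^ 2) - 1) / 6 := fun v => by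
    rw [mixFrom, iSup_hit_path, hitPi_path m hm]
  have hval : (2 * ((m + 1 : ℕ) : ℝ) ^ 2 - 4 * ((m + 1 : ℕ) : ℝ) + 3) / 6 =
      (2 * (m : ℝ) ^ 2 + 1) / 6 := by
    push_cast
    ring
  rw [hval, Tmix]
  apply le_antisymm
  · refine ciSup_le fun v => ?_
    rw [hmix]
    have h0 : (0 : ℝ) ≤ (v : ℕ) := by positivity
    have h1 : ((v : ℕ) : ℝ) ≤ m := by exact_mod_cast (by omega : (v : ℕ) ≤ m)
    rcases max_choice (((v : ℕ) : ℝ) ^ 2) (((m : ℝ) - (v : ℕ)) ^ 2) with h | h <;> rw [h]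
    · nlinarith [sq_nonneg ((m : ℝ) - (v : ℕ))]
    · nlinarith [sq_nonneg ((v : ℕ) : ℝ)]
  · refine le_ciSup_of_le (Set.finite_range _).bddAbove 0 ?_
    rw [hmix]
    simp
    ring_nf
    exact le_rfl

end RWMix
end
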